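/- arXiv:1605.07645 — 5 statements merged into one kernel-verified Lean document; each statement's English description precedes it below -/
import Mathlib

section
/- Let H be a real inner product space, let V₀ be a subspace of H, and let u, û, w ∈ H. Suppose φ ∈ V₀ satisfies ⟨φ, v⟩ = ⟨u − w, v⟩ for all v ∈ V₀, and suppose γ ≥ 0 satisfies γ·‖û − w‖² ≤ ‖φ‖². Then for every δ₁ > 0, ‖û − (w + φ)‖² ≤ (1 + δ₁ − γ)·‖û − w‖² + (2 + 1/δ₁)·‖u − û‖². -/
open RealInnerProductSpace

/-- Single-step error contraction estimate for online adaptive enrichment. -/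
theorem stmt_6 {H : Type*} [NormedAddCommGroup H] [InnerProductSpace ℝ H]
    (V₀ : Submodule ℝ H) (u uh w φ : H) (hφ : φ ∈ V₀)
    (hRiesz : ∀ v ∈ V₀, ⟪φ, v⟫ = ⟪u - w, v⟫)
    (γ : ℝ) (hγ : 0 ≤ γ) (hγle : γ * ‖uh - w‖ ^ 2 ≤ ‖φ‖ ^ 2)
    (δ₁ : ℝ) (hδ₁ : 0 < δ₁) :
    ‖uh - (w + φ)‖ ^ 2
      ≤ (1 + δ₁ - γ) * ‖uh - w‖ ^ 2 + (2 + 1 / δ₁) * ‖u - uh‖ ^ 2 := by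
  have hself : ‖φ‖ ^ 2 = ⟪u - w, φ⟫ := by
    rw [← hRiesz φ hφ, real_inner_self_eq_norm_sq]
  have hsplit : u - w = (uh - w) + (u - uh) := by abel
  have hsub : uh - (w + φ) = (uh - w) - φ := by abel
  have hφle : ‖φ‖ ≤ ‖uh - w‖ + ‖u - uh‖ := by
    have h1 : ‖φ‖ ^ 2 ≤ ‖u - w‖ * ‖φ‖ := hself ▸ real_inner_le_norm _ _
    have h2 : ‖u - w‖ ≤ ‖uh - w‖ + ‖u - uh‖ := hsplit ▸ norm_add_le _ _
    rcases (norm_nonneg φ).eq_or_lt with h0 | h0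
    · rw [← h0]; positivity
    · have h3 : ‖φ‖ ≤ ‖u - w‖ := le_of_mul_le_mul_right (by nlinarith) h0
      exact h3.trans h2
  have hcs : ⟪u - uh, φ⟫ ≤ ‖u - uh‖ * (‖uh - w‖ + ‖u - uh‖) :=
    (real_inner_le_norm _ _).trans (mul_le_mul_of_nonneg_left hφle (norm_nonneg _))
  rw [hsplit, inner_add_left] at hself
  rw [hsub, norm_sub_sq_real]
  generalize ‖uh - w‖ = e at *
  generalize ‖u - uh‖ = d at *
  have hyoung : 2 * (d * e) ≤ δ₁ * e ^ 2 + 1 / δ₁ * d ^ 2 := by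
    have h : δ₁ * e ^ 2 + 1 / δ₁ * d ^ 2 - 2 * (d * e) = (δ₁ * e - d) ^ 2 / δ₁ := by
      field_simp
      ring
    have : 0 ≤ (δ₁ * e - d) ^ 2 / δ₁ := by positivity
    linarith
  nlinarith
end

section
/- Let H be a real inner product space, let V₀ be a subspace of H, and let u, û, w ∈ H. Suppose φ ∈ V₀ satisfies ⟨φ, v⟩ = ⟨u − w, v⟩ for all v ∈ V₀, suppose γ ≥ 0 satisfies γ·‖û − w‖² ≤ ‖φ‖², and suppose w' ∈ H satisfies ‖u − w'‖ ≤ ‖u − (w + φ)‖. Then for all δ₁ > 0 and δ₂ > 0, ‖u − w'‖² ≤ (1 + δ₂)·(1 + δ₁ − γ)·‖û − w‖² + ((1 + δ₂)·(2 + 1/δ₁) + 1 + 1/δ₂)·‖u − û‖². -/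
open RealInnerProductSpace

/-- Abstract online convergence theorem for the adaptive GMsFEM (one step). -/
theorem stmt_7 {H : Type*} [NormedAddCommGroup H] [InnerProductSpace ℝ H]
    (V₀ : Submodule ℝ H) (u uh w φ : H) (hφ : φ ∈ V₀)
    (hRiesz : ∀ v ∈ V₀, ⟪φ, v⟫ = ⟪u - w, v⟫)
    (γ : ℝ) (hγ : 0 ≤ γ) (hγle : γ * ‖uh - w‖ ^ 2 ≤ ‖φ‖ ^ 2)
    (w' : H) (hw' : ‖u - w'‖ ≤ ‖u - (w + φ)‖)
    (δ₁ δ₂ : ℝ) (hδ₁ : 0 < δ₁) (hδ₂ : 0 < δ₂) :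
    ‖u - w'‖ ^ 2
      ≤ (1 + δ₂) * (1 + δ₁ - γ) * ‖uh - w‖ ^ 2
        + ((1 + δ₂) * (2 + 1 / δ₁) + 1 + 1 / δ₂) * ‖u - uh‖ ^ 2 := by
  have h1 : ‖u - (w + φ)‖ ^ 2 = ‖u - w‖ ^ 2 - ‖φ‖ ^ 2 := by
    have h := hRiesz φ hφ
    rw [real_inner_self_eq_norm_sq] at h
    rw [← sub_sub, norm_sub_sq_real, ← h]
    ring
  have h2 : ‖u - w‖ ≤ ‖u - uh‖ + ‖uh - w‖ := norm_sub_le_norm_sub_add_norm_sub u uh w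
  have h3 : ‖u - w'‖ ^ 2 ≤ ‖u - (w + φ)‖ ^ 2 := by gcongr
  have h4 : ‖u - w‖ ^ 2 ≤ (‖u - uh‖ + ‖uh - w‖) ^ 2 := by gcongr
  generalize ‖u - uh‖ = b at *
  generalize ‖uh - w‖ = a at *
  have h5 : (b + a) ^ 2 ≤ (1 + δ₁) * a ^ 2 + (1 + 1 / δ₁) * b ^ 2 := by
    have h6 : (1 + δ₁) * a ^ 2 + (1 + 1 / δ₁) * b ^ 2 - (b + a) ^ 2
        = (δ₁ * a - b) ^ 2 / δ₁ := by
      field_simp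
      ring
    have h7 : 0 ≤ (δ₁ * a - b) ^ 2 / δ₁ := by positivity
    linarith
  have hX : ‖u - w'‖ ^ 2 ≤ (1 + δ₁ - γ) * a ^ 2 + (1 + 1 / δ₁) * b ^ 2 := by linarith
  have h0 : 0 ≤ ‖u - w'‖ ^ 2 := by positivity
  have h8 : 0 ≤ δ₂ * ((1 + δ₁ - γ) * a ^ 2 + (1 + 1 / δ₁) * b ^ 2) :=
    mul_nonneg hδ₂.le (h0.trans hX)
  have h9 : 0 ≤ ((1 + δ₂) + 1 + 1 / δ₂) * b ^ 2 := by positivity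
  linarith
end

section
/- Let H be a real inner product space, let S be a finite index set, and let (V_j)_{j ∈ S} be subspaces of H that are pairwise orthogonal (i.e., ⟨x, y⟩ = 0 whenever x ∈ V_i, y ∈ V_j, i ≠ j). Let u, û, w ∈ H and suppose that for each j ∈ S, φ_j ∈ V_j satisfies ⟨φ_j, v⟩ = ⟨u − w, v⟩ for all v ∈ V_j. Set Φ = Σ_{j ∈ S} φ_j. Then ‖û − (w + Φ)‖² = ‖û − w‖² − Σ_{j ∈ S} ‖φ_j‖² + 2·⟨u − û, Φ⟩. -/
open RealInnerProductSpace

/-- Error identity for simultaneous online enrichment on pairwise orthogonal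
local spaces. -/
theorem stmt_8 {H : Type*} {ι : Type*} [NormedAddCommGroup H]
    [InnerProductSpace ℝ H] (S : Finset ι) (Vs : ι → Submodule ℝ H)
    (horth : ∀ i ∈ S, ∀ j ∈ S, i ≠ j → ∀ x ∈ Vs i, ∀ y ∈ Vs j, ⟪x, y⟫ = 0)
    (u uh w : H) (φ : ι → H) (hmem : ∀ j ∈ S, φ j ∈ Vs j)
    (hRiesz : ∀ j ∈ S, ∀ v ∈ Vs j, ⟪φ j, v⟫ = ⟪u - w, v⟫) :
    ‖uh - (w + ∑ j ∈ S, φ j)‖ ^ 2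
      = ‖uh - w‖ ^ 2 - ∑ j ∈ S, ‖φ j‖ ^ 2 + 2 * ⟪u - uh, ∑ j ∈ S, φ j⟫ := by
  have h1 : ⟪u - w, ∑ j ∈ S, φ j⟫ = ∑ j ∈ S, ‖φ j‖ ^ 2 := by
    rw [inner_sum]
    refine Finset.sum_congr rfl fun j hj => ?_
    rw [← hRiesz j hj _ (hmem j hj), real_inner_self_eq_norm_sq]
  have h2 : ‖∑ j ∈ S, φ j‖ ^ 2 = ∑ j ∈ S, ‖φ j‖ ^ 2 := by
    rw [← real_inner_self_eq_norm_sq, sum_inner]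
    refine Finset.sum_congr rfl fun j hj => ?_
    rw [inner_sum, Finset.sum_eq_single_of_mem j hj, real_inner_self_eq_norm_sq]
    intro k hk hkj
    exact horth j hj k hk hkj.symm _ (hmem j hj) _ (hmem k hk)
  have h3 : uh - w = (u - w) - (u - uh) := by abel
  have h4 : ⟪uh - w, ∑ j ∈ S, φ j⟫
      = ⟪u - w, ∑ j ∈ S, φ j⟫ - ⟪u - uh, ∑ j ∈ S, φ j⟫ := by
    rw [h3, inner_sub_left]
  rw [← sub_sub, norm_sub_sq_real, h4, h1, h2]
  ring
end

section
/- Let H be a real inner product space, let S be a finite index set, and let (V_j)_{j ∈ S} be subspaces of H that are pairwise orthogonal (i.e., ⟨x, y⟩ = 0 whenever x ∈ V_i, y ∈ V_j, i ≠ j). Let u, û, w ∈ H, and suppose that for each j ∈ S, φ_j ∈ V_j satisfies ⟨φ_j, v⟩ = ⟨u − w, v⟩ for all v ∈ V_j. Set Φ = Σ_{j ∈ S} φ_j, and suppose γ ≥ 0 satisfies γ·‖û − w‖² ≤ Σ_{j ∈ S} ‖φ_j‖². Then for every δ₁ > 0, ‖û − (w + Φ)‖² ≤ (1 + δ₁ −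 γ)·‖û − w‖² + (2 + 1/δ₁)·‖u − û‖². -/
open RealInnerProductSpace

/-- Abstract online convergence estimate for simultaneous enrichment on
pairwise orthogonal local spaces. -/
theorem stmt_9 {H : Type*} {ι : Type*} [NormedAddCommGroup H]
    [InnerProductSpace ℝ H] (S : Finset ι) (Vs : ι → Submodule ℝ H)
    (horth : ∀ i ∈ S, ∀ j ∈ S, i ≠ j → ∀ x ∈ Vs i, ∀ y ∈ Vs j, ⟪x, y⟫ = 0)
    (u uh w : H) (φ : ι → H) (hmem : ∀ j ∈ S, φ j ∈ Vs j)
    (hRiesz : ∀ j ∈ S, ∀ v ∈ Vs j, ⟪φ j, v⟫ = ⟪u - w, v⟫)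
    (γ : ℝ) (hγ : 0 ≤ γ) (hγle : γ * ‖uh - w‖ ^ 2 ≤ ∑ j ∈ S, ‖φ j‖ ^ 2)
    (δ₁ : ℝ) (hδ₁ : 0 < δ₁) :
    ‖uh - (w + ∑ j ∈ S, φ j)‖ ^ 2
      ≤ (1 + δ₁ - γ) * ‖uh - w‖ ^ 2 + (2 + 1 / δ₁) * ‖u - uh‖ ^ 2 := by
  have h1 : ⟪∑ j ∈ S, φ j, ∑ j ∈ S, φ j⟫ = ∑ j ∈ S, ‖φ j‖ ^ 2 := by
    rw [sum_inner]
    refine Finset.sum_congr rfl fun i hi => ?_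
    rw [inner_sum, Finset.sum_eq_single i]
    · exact real_inner_self_eq_norm_sq _
    · intro j hj hji
      exact horth i hi j hj (Ne.symm hji) _ (hmem i hi) _ (hmem j hj)
    · intro h
      exact absurd hi h
  have h2 : ⟪u - w, ∑ j ∈ S, φ j⟫ = ∑ j ∈ S, ‖φ j‖ ^ 2 := by
    rw [inner_sum]
    refine Finset.sum_congr rfl fun i hi => ?_
    rw [← hRiesz i hi _ (hmem i hi)]
    exact real_inner_self_eq_norm_sq _
  rw [real_inner_self_eq_norm_sq] at h1
  rw [← h1] at h2 hγle
  generalize (∑ j ∈ S, φ j) = F at *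
  have hF : ‖F‖ ≤ ‖u - w‖ := by
    have := real_inner_le_norm (u - w) F
    by_contra! hlt
    nlinarith [norm_nonneg (u - w), norm_nonneg F]
  have htri : ‖u - w‖ ≤ ‖u - uh‖ + ‖uh - w‖ := norm_sub_le_norm_sub_add_norm_sub _ _ _
  have hsplit : ⟪u - w, F⟫ = ⟪u - uh, F⟫ + ⟪uh - w, F⟫ := by
    rw [← inner_add_left, sub_add_sub_cancel]
  have hcs := real_inner_le_norm (u - uh) F
  have hexp : ‖uh - (w + F)‖ ^ 2 = ‖uh - w‖ ^ 2 - 2 * ⟪uh - w, F⟫ + ‖F‖ ^ 2 := by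
    rw [← sub_sub, norm_sub_sq_real]
  have hd := norm_nonneg (u - uh)
  have hb : ‖u - uh‖ * ‖F‖ ≤ ‖u - uh‖ * (‖u - uh‖ + ‖uh - w‖) :=
    mul_le_mul_of_nonneg_left (hF.trans htri) hd
  have hy : 2 * (‖u - uh‖ * ‖uh - w‖) ≤ δ₁ * ‖uh - w‖ ^ 2 + 1 / δ₁ * ‖u - uh‖ ^ 2 := by
    have : 0 ≤ 1 / δ₁ * (δ₁ * ‖uh - w‖ - ‖u - uh‖) ^ 2 := by positivity
    have e : 1 / δ₁ * (δ₁ * ‖uh - w‖ - ‖u - uh‖) ^ 2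
        = δ₁ * ‖uh - w‖ ^ 2 - 2 * (‖u - uh‖ * ‖uh - w‖) + 1 / δ₁ * ‖u - uh‖ ^ 2 := by
      field_simp
      ring
    linarith
  rw [hexp]
  nlinarith
end

section
/- Let H be a real inner product space, let W and V₀ be subspaces of H, and let u ∈ H. Suppose u_m ∈ W satisfies ⟨u − u_m, v⟩ = 0 for all v ∈ W, suppose φ ∈ V₀ satisfies ⟨φ, v⟩ = ⟨u − u_m, v⟩ for all v ∈ V₀, and suppose u' ∈ W + span{φ} satisfies ⟨u − u', v⟩ = 0 for all v ∈ W + span{φ}. Then ‖u − u'‖² ≤ ‖u − u_m‖² − ‖φ‖². -/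
open RealInnerProductSpace

/-- Online enrichment error-reduction bound for the Galerkin formulation. -/
theorem stmt_11 {H : Type*} [NormedAddCommGroup H] [InnerProductSpace ℝ H]
    (W V₀ : Submodule ℝ H) (u u_m : H) (hum : u_m ∈ W)
    (hGal : ∀ v ∈ W, ⟪u - u_m, v⟫ = 0)
    (φ : H) (hφ : φ ∈ V₀) (hRiesz : ∀ v ∈ V₀, ⟪φ, v⟫ = ⟪u - u_m, v⟫)
    (u' : H) (hu' : u' ∈ W ⊔ Submodule.span ℝ {φ})
    (hGal' : ∀ v ∈ W ⊔ Submodule.span ℝ {φ}, ⟪u - u', v⟫ = 0) :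
    ‖u - u'‖ ^ 2 ≤ ‖u - u_m‖ ^ 2 - ‖φ‖ ^ 2 := by
  have hw : u' - (u_m + φ) ∈ W ⊔ Submodule.span ℝ {φ} :=
    Submodule.sub_mem _ hu' (Submodule.add_mem _ (Submodule.mem_sup_left hum)
      (Submodule.mem_sup_right (Submodule.mem_span_singleton_self φ)))
  have h0 := hGal' _ hw
  have h1 := norm_add_sq_real (u - u') (u' - (u_m + φ))
  have h2 := norm_sub_sq_real (u - u_m) φ
  have h3 := hRiesz φ hφ
  rw [real_inner_self_eq_norm_sq] at h3
  have h4 : (u - u') + (u' - (u_m + φ)) = u - u_m - φ := by abel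
  rw [h4] at h1
  nlinarith [sq_nonneg ‖u' - (u_m + φ)‖]
end
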